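/- Let n ≥ 1, let 1 < p < ∞, let w be a weight on ℝⁿ satisfying the Berezhnoi–Muckenhoupt condition for exponent p, and let C ⊆ ℝⁿ be a nonempty open cone with vertex at the origin. Let a ∈ L^∞(ℝⁿ;ℂ) and suppose there is M ≥ 0 such that ‖F^{-1}(a·Fu)‖_{L^p(ℝⁿ,w)} ≤ M‖u‖_{L^p(ℝⁿ,w)} for all u ∈ L²(ℝⁿ) ∩ L^p(ℝⁿ,w). Then the set G := { W_C(a)u : u ∈ L²(C) ∩ L^p(C,w), ‖u‖_{L^p(C,w)} ≤ 1 } ⊆ L^p(C,w) satisfies κ(G) ≥ ‖a‖_{L^∞(ℝⁿ)}. -/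

import Mathlib

open MeasureTheory Filter Metric Complex ENNReal NNReal

noncomputable section

abbrev Eucl (n : ℕ) := EuclideanSpace ℝ (Fin n)

/-- The Fourier integral with the convention `(Fu)(ξ) = ∫ u(x) e^{-i x·ξ} dx`. -/
def fourierInt {n : ℕ} (u : Eucl n → ℂ) (ξ : Eucl n) : ℂ :=
  ∫ x : Eucl n, Complex.exp (-(Complex.I * ((inner ℝ x ξ : ℝ) : ℂ))) * u x

/-- The inverse Fourier integral `(F⁻¹u)(x) = (2π)^{-n} ∫ u(ξ) e^{i x·ξ} dξ`. -/
def fourierIntInv {n : ℕ} (u : Eucl n → ℂ) (x : Eucl n) : ℂ :=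
  (((2 * Real.pi) ^ n : ℝ)⁻¹ : ℂ) •
    ∫ ξ : Eucl n, Complex.exp (Complex.I * ((inner ℝ x ξ : ℝ) : ℂ)) * u ξ

/-- A pair consisting of the Fourier–Plancherel transform on `L²(ℝⁿ;ℂ)` and its inverse:
continuous linear maps on `L²` that are mutually inverse and agree with the Fourier
integral (resp. the inverse Fourier integral) on `L¹ ∩ L²`.  Such a pair exists and is
unique by Plancherel's theorem. -/
structure FourierPlancherelPair (n : ℕ) where
  F : Lp ℂ 2 (volume : Measure (Eucl n)) →L[ℂ] Lp ℂ 2 (volume : Measure (Eucl n))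
  Finv : Lp ℂ 2 (volume : Measure (Eucl n)) →L[ℂ] Lp ℂ 2 (volume : Measure (Eucl n))
  inv_comp : ∀ u, Finv (F u) = u
  comp_inv : ∀ u, F (Finv u) = u
  F_int : ∀ (u : Eucl n → ℂ), Integrable u → ∀ (hu2 : MemLp u 2 (volume : Measure (Eucl n))),
    (F (hu2.toLp u) : Eucl n → ℂ) =ᵐ[volume] fourierInt u
  Finv_int : ∀ (u : Eucl n → ℂ), Integrable u → ∀ (hu2 : MemLp u 2 (volume : Measure (Eucl n))),
    (Finv (hu2.toLp u) : Eucl n → ℂ) =ᵐ[volume] fourierIntInv u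

/-- Multiplication by an `L^∞` function as a map on `L²`. -/
def mulOp {n : ℕ} (a : Eucl n → ℂ) (ha : MemLp a ⊤ (volume : Measure (Eucl n)))
    (v : Lp ℂ 2 (volume : Measure (Eucl n))) : Lp ℂ 2 (volume : Measure (Eucl n)) :=
  (((Lp.memLp v).smul ha : MemLp (a • (v : Eucl n → ℂ)) 2 volume)).toLp _

/-- The Wiener–Hopf type operator `W_Ω(a) u = r_Ω F⁻¹ (a · F(e_Ω u))`, realised as a
function on `ℝⁿ` supported in `Ω` (i.e. `e_Ω W_Ω(a) u`). -/
def WOp {n : ℕ} (FP : FourierPlancherelPair n) (a : Eucl n → ℂ)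
    (ha : MemLp a ⊤ (volume : Measure (Eucl n))) (Ω : Set (Eucl n)) (u : Eucl n → ℂ)
    (hu : MemLp (Ω.indicator u) 2 (volume : Measure (Eucl n))) : Eucl n → ℂ :=
  Ω.indicator (FP.Finv (mulOp a ha (FP.F (hu.toLp _))) : Eucl n → ℂ)

/-- The norm of `f` in the weighted Lebesgue space `L^p(ℝⁿ, w)`, i.e.
`(∫ |f(x) w(x)|^p dx)^{1/p}`, computed in `[0,∞]`. -/
def wLpNorm {n : ℕ} (f : Eucl n → ℂ) (p : ℝ) (w : Eucl n → ℝ≥0∞) : ℝ≥0∞ :=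
  (∫⁻ x : Eucl n, (‖f x‖₊ : ℝ≥0∞) ^ p * w x ^ p) ^ (1 / p)

/-- The Berezhnoi–Muckenhoupt condition for a weight `w : ℝⁿ → [0,∞]` and an exponent
`p ∈ (1,∞)` with conjugate exponent `q`:
`sup_B |B|⁻¹ (∫_B w^p)^{1/p} (∫_B w^{-q})^{1/q} < ∞`, the supremum being over all balls. -/
def BMCondition {n : ℕ} (w : Eucl n → ℝ≥0∞) (p q : ℝ) : Prop :=
  ∃ K : ℝ≥0∞, K ≠ ∞ ∧ ∀ (y : Eucl n) (r : ℝ), 0 < r →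
    (volume (ball y r))⁻¹ * (∫⁻ x in ball y r, w x ^ p) ^ (1 / p) *
      (∫⁻ x in ball y r, (w x)⁻¹ ^ q) ^ (1 / q) ≤ K


theorem fourierInt_integrable {n : ℕ} (φ : Eucl n → ℂ) (hs : HasCompactSupport φ)
    (hd : ContDiff ℝ ((⊤ : ℕ∞) : WithTop ℕ∞) φ) : Integrable (fourierInt φ) := by
  have h1 := SchwartzMap.integrable (μ := (volume : Measure (Eucl n)))
    (FourierTransform.fourier (hs.toSchwartzMap hd))
  rw [SchwartzMap.fourier_coe] at h1
  have h2 := h1.comp_smul (R := (2 * Real.pi)⁻¹) (by positivity)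
  refine h2.congr (Eventually.of_forall fun ξ => ?_)
  simp only
  rw [Real.fourier_eq', fourierInt]
  congr 1
  ext x
  rw [smul_eq_mul]
  congr 2
  rw [inner_smul_right]
  have : (-2 * Real.pi * ((2 * Real.pi)⁻¹ * inner ℝ x ξ)) = - inner ℝ x ξ := by
    field_simp
  rw [this]
  push_cast
  ring

theorem norm_fourierInt_le {n : ℕ} (φ : Eucl n → ℂ) (ξ : Eucl n) :
    ‖fourierInt φ ξ‖ ≤ ∫ x, ‖φ x‖ := by
  refine (norm_integral_le_integral_norm _).trans (le_of_eq ?_)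
  congr 1
  ext x
  rw [norm_mul, Complex.norm_exp]
  simp

theorem integral_scale {n : ℕ} {G : Type*} [NormedAddCommGroup G] [NormedSpace ℝ G]
    (h : Eucl n → G) (R : ℝ) (hR : 0 < R) (y : Eucl n) :
    ∫ x, h (R • (x - y)) = (R ^ n)⁻¹ • ∫ z, h z := by
  rw [integral_sub_right_eq_self (fun x => h (R • x)) y,
    Measure.integral_comp_smul_of_nonneg volume h R (hR := hR.le)]
  simp

/-- The modulated, translated and dilated test function. -/
def testFun {n : ℕ} (φ : Eucl n → ℂ) (τ : ℝ) (η y : Eucl n) (R : ℝ) (x : Eucl n) : ℂ :=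
  (τ : ℂ) * (Complex.exp (Complex.I * ((inner ℝ x η : ℝ) : ℂ)) * φ (R⁻¹ • (x - y)))

theorem norm_testFun {n : ℕ} (φ : Eucl n → ℂ) (τ : ℝ) (η y : Eucl n) (R : ℝ) (x : Eucl n) :
    ‖testFun φ τ η y R x‖ = |τ| * ‖φ (R⁻¹ • (x - y))‖ := by
  rw [testFun, norm_mul, norm_mul, Complex.norm_exp]
  simp

theorem fourierInt_testFun {n : ℕ} (φ : Eucl n → ℂ) (τ : ℝ) (η y : Eucl n) (R : ℝ) (hR : 0 < R)
    (ξ : Eucl n) :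
    fourierInt (testFun φ τ η y R) ξ =
      (τ : ℂ) * (Complex.exp (-(Complex.I * ((inner ℝ y (ξ - η) : ℝ) : ℂ))) *
        ((R ^ n : ℝ) : ℂ) * fourierInt φ (R • (ξ - η))) := by
  have key := integral_scale (fun z : Eucl n =>
    Complex.exp (-(Complex.I * ((inner ℝ (R • z + y) (ξ - η) : ℝ) : ℂ))) * φ z)
    R⁻¹ (by positivity) y
  have e1 : ∀ x : Eucl n, R • R⁻¹ • (x - y) + y = x := by
    intro x
    rw [smul_inv_smul₀ hR.ne', sub_add_cancel]
  simp only [e1] at key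
  rw [fourierInt]
  have e2 : ∀ x : Eucl n, Complex.exp (-(Complex.I * ((inner ℝ x ξ : ℝ) : ℂ))) *
      testFun φ τ η y R x = (τ : ℂ) * (Complex.exp (-(Complex.I * ((inner ℝ x (ξ - η) : ℝ) : ℂ)))
        * φ (R⁻¹ • (x - y))) := by
    intro x
    rw [testFun, inner_sub_right]
    have : -(Complex.I * ((inner ℝ x ξ - inner ℝ x η : ℝ) : ℂ)) =
      -(Complex.I * ((inner ℝ x ξ : ℝ) : ℂ)) + Complex.I * ((inner ℝ x η : ℝ) : ℂ) := by
      push_cast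
      ring
    rw [this, Complex.exp_add]
    ring
  simp only [e2]
  rw [integral_const_mul, key, fourierInt]
  have e3 : ∀ z : Eucl n, Complex.exp (-(Complex.I * ((inner ℝ (R • z + y) (ξ - η) : ℝ) : ℂ))) * φ z
      = Complex.exp (-(Complex.I * ((inner ℝ y (ξ - η) : ℝ) : ℂ))) *
        (Complex.exp (-(Complex.I * ((inner ℝ z (R • (ξ - η)) : ℝ) : ℂ))) * φ z) := by
    intro z
    rw [inner_add_left, inner_smul_left, inner_smul_right]
    have : -(Complex.I * ((starRingEnd ℝ R * inner ℝ z (ξ - η) + inner ℝ y (ξ - η) : ℝ) : ℂ)) =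
      -(Complex.I * ((inner ℝ y (ξ - η) : ℝ) : ℂ)) +
        -(Complex.I * ((R * inner ℝ z (ξ - η) : ℝ) : ℂ)) := by
      simp
      ring
    rw [this, Complex.exp_add]
    ring
  simp only [e3]
  rw [integral_const_mul, inv_pow, inv_inv, Complex.real_smul]
  ring

theorem testFun_continuous {n : ℕ} (φ : Eucl n → ℂ) (hc : Continuous φ) (τ : ℝ) (η y : Eucl n)
    (R : ℝ) : Continuous (testFun φ τ η y R) := by
  unfold testFun
  fun_prop

theorem testFun_compact {n : ℕ} (φ : Eucl n → ℂ) (hs : HasCompactSupport φ) (τ : ℝ) (η y : Eucl n)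
    (R : ℝ) (hR : 0 < R) : HasCompactSupport (testFun φ τ η y R) := by
  obtain ⟨T, hT⟩ := hs.isCompact.isBounded.subset_closedBall 0
  refine HasCompactSupport.of_support_subset_isCompact (isCompact_closedBall y (R * T)) ?_
  intro x hx
  have h1 : φ (R⁻¹ • (x - y)) ≠ 0 := by
    intro h0
    apply hx
    simp [testFun, h0]
  have h2 := hT (subset_tsupport _ h1)
  rw [mem_closedBall_zero_iff, norm_smul, norm_inv, Real.norm_of_nonneg hR.le] at h2
  rw [mem_closedBall, dist_eq_norm]
  rwa [inv_mul_le_iff₀ hR] at h2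

/-- The error functional. -/
def errInt {n : ℕ} (a φ : Eucl n → ℂ) (η : Eucl n) (R : ℝ) : ℝ :=
  ∫ ξ, ‖a ξ - a η‖ * (R ^ n * ‖fourierInt φ (R • (ξ - η))‖)

theorem approx_pointwise {n : ℕ} (FP : FourierPlancherelPair n) (a : Eucl n → ℂ)
    (ha : MemLp a ⊤ (volume : Measure (Eucl n))) (φ : Eucl n → ℂ) (hs : HasCompactSupport φ)
    (hd : ContDiff ℝ ((⊤ : ℕ∞) : WithTop ℕ∞) φ) (τ : ℝ) (η y : Eucl n) (R : ℝ) (hR : 0 < R)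
    (hu2 : MemLp (testFun φ τ η y R) 2 (volume : Measure (Eucl n))) :
    ∀ᵐ x, ‖(FP.Finv (mulOp a ha (FP.F (hu2.toLp _))) : Eucl n → ℂ) x -
      a η * testFun φ τ η y R x‖ ≤ |τ| * ((((2 * Real.pi) ^ n : ℝ)⁻¹) * errInt a φ η R) := by
  set u := testFun φ τ η y R with hu
  have hui : Integrable u :=
    (testFun_continuous φ hd.continuous τ η y R).integrable_of_hasCompactSupport
      (testFun_compact φ hs τ η y R hR)
  have hF := FP.F_int u hui hu2
  have hfi : Integrable (fourierInt u) := by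
    have h0 : Integrable (fun ξ : Eucl n => fourierInt φ (R • (ξ - η))) :=
      ((fourierInt_integrable φ hs hd).comp_smul hR.ne').comp_sub_right η
    have h1 : Integrable (fun ξ : Eucl n => R ^ n * ‖fourierInt φ (R • (ξ - η))‖ * |τ|) :=
      (h0.norm.const_mul (R ^ n)).mul_const |τ|
    refine h1.mono' ((Lp.aestronglyMeasurable (FP.F (hu2.toLp u))).congr hF) ?_
    refine Eventually.of_forall fun ξ => ?_
    rw [hu, fourierInt_testFun φ τ η y R hR, norm_mul, norm_mul, norm_mul, Complex.norm_exp]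
    simp [abs_of_pos hR]
    apply le_of_eq
    ring
  have hnorm : ∀ ξ, ‖fourierInt u ξ‖ = |τ| * (R ^ n * ‖fourierInt φ (R • (ξ - η))‖) := by
    intro ξ
    rw [hu, fourierInt_testFun φ τ η y R hR, norm_mul, norm_mul, norm_mul, Complex.norm_exp]
    simp [abs_of_pos hR]
  have hf2 : MemLp (fourierInt u) 2 volume := (memLp_congr_ae hF).1 (Lp.memLp _)
  have hFu : FP.F (hu2.toLp u) = hf2.toLp _ := by
    apply Lp.ext
    exact hF.trans hf2.coeFn_toLp.symm
  have hinv : u =ᵐ[volume] fourierIntInv (fourierInt u) := by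
    have h1 := FP.Finv_int _ hfi hf2
    rw [← hFu, FP.inv_comp] at h1
    exact hu2.coeFn_toLp.symm.trans h1
  have haf2 : MemLp (fun ξ => a ξ * fourierInt u ξ) 2 volume := hf2.smul ha
  have hafi : Integrable (fun ξ => a ξ * fourierInt u ξ) := by
    have := (memLp_one_iff_integrable.2 hfi).smul (r := 1) ha
    exact memLp_one_iff_integrable.1 this
  have hmul : mulOp a ha (FP.F (hu2.toLp u)) = haf2.toLp _ := by
    apply Lp.ext
    refine (MemLp.coeFn_toLp _).trans (EventuallyEq.trans ?_ haf2.coeFn_toLp.symm)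
    filter_upwards [hF] with ξ hξ
    simp [hξ]
  have hW := FP.Finv_int _ hafi haf2
  rw [← hmul] at hW
  filter_upwards [hW, hinv] with x hx1 hx2
  rw [hx1, ← hu, hx2, fourierIntInv, fourierIntInv, smul_eq_mul, smul_eq_mul, mul_left_comm, ← mul_sub,
    ← integral_const_mul, norm_mul]
  have hb : ∀ v : Eucl n → ℂ, Integrable v → Integrable (fun ξ : Eucl n =>
      Complex.exp (Complex.I * ((inner ℝ x ξ : ℝ) : ℂ)) * v ξ) := by
    intro v hv
    refine hv.norm.mono' ?_ (Eventually.of_forall fun ξ => ?_)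
    · refine AEStronglyMeasurable.mul (Continuous.aestronglyMeasurable ?_) hv.1
      fun_prop
    · rw [norm_mul, Complex.norm_exp]
      simp
  rw [← integral_sub (hb _ hafi) ((hb _ hfi).const_mul _)]
  rw [mul_left_comm]
  have e1 : ‖(((2 * Real.pi) ^ n : ℝ)⁻¹ : ℂ)‖ = ((2 * Real.pi) ^ n : ℝ)⁻¹ := by
    rw [norm_inv, Complex.norm_real, Real.norm_of_nonneg (by positivity)]
  rw [e1]
  refine mul_le_mul_of_nonneg_left ?_ (by positivity)
  refine (norm_integral_le_integral_norm _).trans (le_of_eq ?_)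
  rw [errInt, ← integral_const_mul]
  congr 1
  ext ξ
  have : Complex.exp (Complex.I * ((inner ℝ x ξ : ℝ) : ℂ)) * (a ξ * fourierInt u ξ) -
      a η * (Complex.exp (Complex.I * ((inner ℝ x ξ : ℝ) : ℂ)) * fourierInt u ξ) =
      Complex.exp (Complex.I * ((inner ℝ x ξ : ℝ) : ℂ)) * ((a ξ - a η) * fourierInt u ξ) := by
    ring
  rw [this, norm_mul, norm_mul, hnorm, Complex.norm_exp]
  simp
  ring

theorem errInt_small {n : ℕ} (a : Eucl n → ℂ)
    (ha : MemLp a ⊤ (volume : Measure (Eucl n))) (φ : Eucl n → ℂ) (hs : HasCompactSupport φ)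
    (hd : ContDiff ℝ ((⊤ : ℕ∞) : WithTop ℕ∞) φ) (η : Eucl n)
    (hη : Tendsto (fun δ : ℝ => ⨍ ξ in closedBall η δ, ‖a ξ - a η‖) (nhdsWithin 0 (Set.Ioi 0))
      (nhds 0)) (ε : ℝ) (hε : 0 < ε) :
    ∃ R0 : ℝ, 0 < R0 ∧ ∀ R, R0 ≤ R → errInt a φ η R ≤ ε := by
  obtain ⟨D, hD0, hD⟩ : ∃ D : ℝ, 0 < D ∧ ∀ᵐ ξ, ‖a ξ - a η‖ ≤ D := by
    refine ⟨(eLpNorm a ⊤ volume).toReal + ‖a η‖ + 1, by positivity, ?_⟩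
    have h1 : ∀ᵐ ξ, ‖a ξ‖ₑ ≤ eLpNorm a ⊤ volume := by
      rw [eLpNorm_exponent_top]
      exact ae_le_eLpNormEssSup
    filter_upwards [h1] with ξ hξ
    have h2 : ‖a ξ‖ ≤ (eLpNorm a ⊤ volume).toReal := by
      have := ENNReal.toReal_mono ha.2.ne hξ
      simpa using this
    have := norm_sub_le (a ξ) (a η)
    linarith
  set g : Eucl n → ℝ := fun ζ => ‖fourierInt φ ζ‖ with hg
  have hgi : Integrable g := (fourierInt_integrable φ hs hd).norm
  have hg0 : ∀ ζ, 0 ≤ g ζ := fun ζ => norm_nonneg _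
  obtain ⟨Q, hQ0, hQ⟩ : ∃ Q : ℝ, 0 < Q ∧ ∀ ζ, g ζ ≤ Q := by
    refine ⟨(∫ x, ‖φ x‖) + 1, ?_, fun ζ => ?_⟩
    · have : 0 ≤ ∫ x, ‖φ x‖ := integral_nonneg fun _ => norm_nonneg _
      linarith
    · have := norm_fourierInt_le φ ζ
      linarith
  obtain ⟨T, hT0, hT⟩ : ∃ T : ℝ, 0 < T ∧
      ∫ ζ in (closedBall (0 : Eucl n) T)ᶜ, g ζ ≤ ε / (2 * D) := by
    have h1 : Tendsto (fun k : ℕ => ∫ ζ in (closedBall (0 : Eucl n) k)ᶜ, g ζ) atTop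
        (nhds (∫ ζ in ⋂ k : ℕ, (closedBall (0 : Eucl n) k)ᶜ, g ζ)) := by
      apply tendsto_setIntegral_of_antitone
      · intro k
        exact measurableSet_closedBall.compl
      · intro i j hij
        apply Set.compl_subset_compl.2
        exact closedBall_subset_closedBall (by exact_mod_cast hij)
      · exact ⟨0, hgi.integrableOn⟩
    have h2 : (⋂ k : ℕ, (closedBall (0 : Eucl n) k)ᶜ) = ∅ := by
      rw [← Set.compl_iUnion, iUnion_closedBall_nat, Set.compl_univ]
    rw [h2, setIntegral_empty] at h1
    have h3 := (h1.eventually (gt_mem_nhds (show 0 < ε / (2 * D) by positivity))).and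
      (eventually_gt_atTop 0)
    obtain ⟨k, hk, hk0⟩ := h3.exists
    exact ⟨k, by exact_mod_cast hk0, hk.le⟩
  set V : ℝ := volume.real (closedBall (0 : Eucl n) 1) with hV
  have hV0 : 0 < V := by
    rw [hV, Measure.real, ENNReal.toReal_pos_iff]
    exact ⟨measure_closedBall_pos _ _ one_pos, measure_closedBall_lt_top⟩
  have h4 := hη.eventually (gt_mem_nhds (show 0 < ε / (2 * (Q * T ^ n * V)) by positivity))
  rw [eventually_nhdsWithin_iff, Metric.eventually_nhds_iff] at h4
  obtain ⟨δ, hδ0, hδ⟩ := h4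
  refine ⟨2 * T / δ, by positivity, fun R hR => ?_⟩
  have hR0 : 0 < R := lt_of_lt_of_le (by positivity) hR
  have hTR : T / R < δ := by
    rw [div_le_iff₀ hδ0] at hR
    rw [div_lt_iff₀ hR0]
    nlinarith
  have h5 : ⨍ ξ in closedBall η (T / R), ‖a ξ - a η‖ < ε / (2 * (Q * T ^ n * V)) := by
    apply hδ _ (show 0 < T / R by positivity)
    rw [Real.dist_eq, sub_zero, abs_of_pos (by positivity)]
    exact hTR
  set S := closedBall η (T / R) with hS
  have hvS : volume.real S = (T / R) ^ n * V := by
    rw [hS, Measure.real, Measure.addHaar_closedBall' _ _ (by positivity), ENNReal.toReal_mul,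
      ENNReal.toReal_ofReal (by positivity)]
    simp [hV, Measure.real]
  have h6 : ∫ ξ in S, ‖a ξ - a η‖ ≤ (T / R) ^ n * V * (ε / (2 * (Q * T ^ n * V))) := by
    rw [setAverage_eq, hvS, smul_eq_mul, inv_mul_lt_iff₀ (by positivity)] at h5
    exact h5.le
  have hiS : IntegrableOn (fun ξ => ‖a ξ - a η‖) S := by
    refine Measure.integrableOn_of_bounded (M := D) measure_closedBall_lt_top.ne ?_ ?_
    · exact (ha.1.sub aestronglyMeasurable_const).norm
    · apply ae_restrict_of_ae
      filter_upwards [hD] with ξ hξ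
      simpa using hξ
  set h : Eucl n → ℝ := (closedBall (0 : Eucl n) T)ᶜ.indicator g with hh
  have hhi : Integrable h := hgi.indicator measurableSet_closedBall.compl
  have hh' : Integrable (fun ξ => h (R • (ξ - η))) := (hhi.comp_smul hR0.ne').comp_sub_right η
  have hmain : errInt a φ η R ≤ ∫ ξ, (Q * R ^ n * S.indicator (fun ξ => ‖a ξ - a η‖) ξ +
      D * R ^ n * h (R • (ξ - η))) := by
    refine integral_mono_of_nonneg ?_ ?_ ?_
    · exact Eventually.of_forall fun ξ => by positivity
    · exact ((hiS.integrable_indicator measurableSet_closedBall).const_mul _).add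
        (hh'.const_mul _)
    · filter_upwards [hD] with ξ hξ
      by_cases hm : ξ ∈ S
      · have h7 : 0 ≤ h (R • (ξ - η)) := Set.indicator_nonneg (fun _ _ => hg0 _) _
        rw [Set.indicator_of_mem hm]
        have h8 := hQ (R • (ξ - η))
        have h9 : ‖a ξ - a η‖ * (R ^ n * g (R • (ξ - η))) ≤ ‖a ξ - a η‖ * (R ^ n * Q) := by
          gcongr
        have h10 : 0 ≤ D * R ^ n * h (R • (ξ - η)) := by positivity
        change ‖a ξ - a η‖ * (R ^ n * g (R • (ξ - η))) ≤ _
        linarith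
      · rw [Set.indicator_of_notMem hm]
        have h7 : R • (ξ - η) ∈ (closedBall (0 : Eucl n) T)ᶜ := by
          intro hc
          apply hm
          rw [mem_closedBall_zero_iff, norm_smul, Real.norm_of_nonneg hR0.le] at hc
          rw [hS, mem_closedBall, dist_eq_norm, le_div_iff₀ hR0]
          linarith
        rw [hh, Set.indicator_of_mem h7]
        have h9 : ‖a ξ - a η‖ * (R ^ n * g (R • (ξ - η))) ≤ D * (R ^ n * g (R • (ξ - η))) := by
          have := hg0 (R • (ξ - η))
          gcongr
        change ‖a ξ - a η‖ * (R ^ n * g (R • (ξ - η))) ≤ _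
        linarith
  refine hmain.trans ?_
  rw [integral_add ((hiS.integrable_indicator measurableSet_closedBall).const_mul _)
        (hh'.const_mul _), integral_const_mul, integral_const_mul, integral_scale h R hR0 η,
    integral_indicator measurableSet_closedBall, hh,
    integral_indicator measurableSet_closedBall.compl, smul_eq_mul]
  have e1 : Q * R ^ n * ∫ ξ in S, ‖a ξ - a η‖ ≤ ε / 2 := by
    calc Q * R ^ n * ∫ ξ in S, ‖a ξ - a η‖
        ≤ Q * R ^ n * ((T / R) ^ n * V * (ε / (2 * (Q * T ^ n * V)))) := by gcongr
      _ = ε / 2 := by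
        rw [div_pow]
        field_simp
  have e2 : D * R ^ n * ((R ^ n)⁻¹ * ∫ ζ in (closedBall (0 : Eucl n) T)ᶜ, g ζ) ≤ ε / 2 := by
    calc D * R ^ n * ((R ^ n)⁻¹ * ∫ ζ in (closedBall (0 : Eucl n) T)ᶜ, g ζ)
        ≤ D * R ^ n * ((R ^ n)⁻¹ * (ε / (2 * D))) := by gcongr
      _ = ε / 2 := by
        field_simp
  linarith

theorem exists_lebesgue_point {n : ℕ} (a : Eucl n → ℂ)
    (ha : MemLp a ⊤ (volume : Measure (Eucl n))) (c : ℝ≥0∞) (hc : c < eLpNorm a ⊤ volume) :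
    ∃ η : Eucl n, c < ‖a η‖ₑ ∧
    Tendsto (fun δ : ℝ => ⨍ ξ in closedBall η δ, ‖a ξ - a η‖) (nhdsWithin 0 (Set.Ioi 0))
      (nhds 0) := by
  have hloc : LocallyIntegrable a (volume : Measure (Eucl n)) := ha.locallyIntegrable le_top
  have h1 := IsUnifLocDoublingMeasure.ae_tendsto_average_norm_sub volume hloc 1
  by_contra hcon
  push Not at hcon
  have h2 : ∀ᵐ ξ, ‖a ξ‖ₑ ≤ c := by
    filter_upwards [h1] with ξ hξ
    by_contra hlt
    push Not at hlt
    refine hcon ξ hlt ?_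
    refine hξ (fun _ => ξ) (fun δ => δ) tendsto_id ?_
    filter_upwards [self_mem_nhdsWithin] with δ hδ
    have : (0 : ℝ) < δ := hδ
    simp [this.le]
  rw [eLpNorm_exponent_top] at hc
  exact absurd (essSup_le_of_ae_le c h2) (not_le.2 hc)

/-- The measure `w^p dx`. -/
def wMeas {n : ℕ} (w : Eucl n → ℝ≥0∞) (p : ℝ) : Measure (Eucl n) :=
  volume.withDensity (fun x => w x ^ p)

theorem wMeas_ac {n : ℕ} (w : Eucl n → ℝ≥0∞) (p : ℝ) : wMeas w p ≪ volume :=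
  withDensity_absolutelyContinuous _ _

theorem wLpNorm_eq {n : ℕ} (w : Eucl n → ℝ≥0∞) (hwmeas : Measurable w) (p : ℝ) (hp : 1 < p)
    (f : Eucl n → ℂ) (hf : AEStronglyMeasurable f volume) :
    wLpNorm f p w = eLpNorm f (ENNReal.ofReal p) (wMeas w p) := by
  have hp0 : 0 < p := by linarith
  rw [eLpNorm_eq_lintegral_rpow_enorm_toReal (by simpa using hp0) ENNReal.ofReal_ne_top,
    ENNReal.toReal_ofReal hp0.le, wLpNorm, wMeas,
    lintegral_withDensity_eq_lintegral_mul₀ (hwmeas.pow_const p).aemeasurable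
      (hf.enorm.pow_const p)]
  congr 2
  ext x
  rw [Pi.mul_apply, mul_comm]
  rfl

theorem wMeas_ball {n : ℕ} (w : Eucl n → ℝ≥0∞) (p : ℝ) (y : Eucl n) (R : ℝ) :
    wMeas w p (ball y R) = ∫⁻ x in ball y R, w x ^ p :=
  withDensity_apply _ measurableSet_ball

theorem wMeas_ball_pos {n : ℕ} (w : Eucl n → ℝ≥0∞) (hwmeas : Measurable w)
    (hw : ∀ᵐ x : Eucl n, 0 < w x ∧ w x < ∞) (p : ℝ) (hp : 1 < p) (y : Eucl n) (R : ℝ)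
    (hR : 0 < R) : wMeas w p (ball y R) ≠ 0 := by
  rw [wMeas_ball]
  intro h0
  rw [lintegral_eq_zero_iff (hwmeas.pow_const p)] at h0
  have h1 : ∀ᵐ x ∂(volume.restrict (ball y R)), False := by
    filter_upwards [h0, ae_restrict_of_ae hw] with x hx1 hx2
    have h3 : w x ^ p = 0 := hx1
    rw [ENNReal.rpow_eq_zero_iff] at h3
    rcases h3 with h | h
    · exact hx2.1.ne' h.1
    · linarith [h.2]
  rw [eventually_false_iff_eq_bot, ae_eq_bot, Measure.restrict_eq_zero] at h1
  exact (measure_ball_pos volume y hR).ne' h1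

theorem winv_ball_pos {n : ℕ} (w : Eucl n → ℝ≥0∞) (hwmeas : Measurable w)
    (hw : ∀ᵐ x : Eucl n, 0 < w x ∧ w x < ∞) (q : ℝ) (hq : 1 < q) (y : Eucl n) (R : ℝ)
    (hR : 0 < R) : ∫⁻ x in ball y R, (w x)⁻¹ ^ q ≠ 0 := by
  have := wMeas_ball_pos (fun x => (w x)⁻¹) hwmeas.inv (by
    filter_upwards [hw] with x hx
    exact ⟨ENNReal.inv_pos.2 hx.2.ne, ENNReal.inv_lt_top.2 hx.1⟩) q hq y R hR
  rwa [wMeas_ball] at this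

theorem wMeas_ball_lt_top {n : ℕ} (w : Eucl n → ℝ≥0∞) (hwmeas : Measurable w)
    (hw : ∀ᵐ x : Eucl n, 0 < w x ∧ w x < ∞) (p q : ℝ) (hp : 1 < p) (hq : 1 < q)
    (hBM : BMCondition w p q) (y : Eucl n) (R : ℝ)
    (hR : 0 < R) : wMeas w p (ball y R) ≠ ∞ := by
  obtain ⟨K, hK, h⟩ := hBM
  have h1 := h y R hR
  rw [← wMeas_ball] at h1
  intro htop
  have h2 := winv_ball_pos w hwmeas hw q hq y R hR
  rw [htop, ENNReal.top_rpow_of_pos (by positivity), ENNReal.mul_top, ENNReal.top_mul] at h1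
  · exact hK (top_le_iff.1 h1)
  · intro h3
    rw [ENNReal.rpow_eq_zero_iff] at h3
    rcases h3 with h3 | h3
    · exact h2 h3.1
    · have : (0 : ℝ) < 1 / q := by positivity
      linarith [h3.2]
  · exact ENNReal.inv_ne_zero.2 measure_ball_lt_top.ne

theorem doubling {n : ℕ} (w : Eucl n → ℝ≥0∞) (hwmeas : Measurable w)
    (hw : ∀ᵐ x : Eucl n, 0 < w x ∧ w x < ∞) (p q : ℝ) (hpq : p.HolderConjugate q)
    (hBM : BMCondition w p q) :
    ∃ K : ℝ≥0∞, K ≠ ∞ ∧ ∀ (y : Eucl n) (R s : ℝ), 0 < R → R ≤ s →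
      (wMeas w p (ball y s)) ^ (1 / p) ≤
        K * ENNReal.ofReal ((s / R) ^ n) * (wMeas w p (ball y R)) ^ (1 / p) := by
  obtain ⟨K, hK, h⟩ := hBM
  refine ⟨K, hK, fun y R s hR hRs => ?_⟩
  have hs : 0 < s := hR.trans_le hRs
  have h1 := h y s hs
  rw [← wMeas_ball] at h1
  set P := (wMeas w p (ball y s)) ^ (1 / p)
  set Z := (∫⁻ x in ball y s, (w x)⁻¹ ^ q) ^ (1 / q)
  set N := (wMeas w p (ball y R)) ^ (1 / p) with hN
  have hv0 : volume (ball y R) ≠ 0 := (measure_ball_pos volume y hR).ne'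
  have hvt : volume (ball y R) ≠ ∞ := measure_ball_lt_top.ne
  have hv0' : volume (ball y s) ≠ 0 := (measure_ball_pos volume y hs).ne'
  have hvt' : volume (ball y s) ≠ ∞ := measure_ball_lt_top.ne
  have h2 : P * Z ≤ volume (ball y s) * K := by
    rw [mul_assoc] at h1
    rwa [ENNReal.inv_mul_le_iff hv0' hvt'] at h1
  have h3 : volume (ball y R) ≤ N * Z := by
    have e1 : volume (ball y R) = ∫⁻ x in ball y R, (w * fun x => (w x)⁻¹) x := by
      rw [← setLIntegral_one]
      apply lintegral_congr_ae
      filter_upwards [ae_restrict_of_ae hw] with x hx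
      rw [Pi.mul_apply, ENNReal.mul_inv_cancel hx.1.ne' hx.2.ne]
    rw [e1]
    refine (ENNReal.lintegral_mul_le_Lp_mul_Lq _ hpq hwmeas.aemeasurable
      hwmeas.inv.aemeasurable).trans ?_
    rw [← wMeas_ball]
    have hq0 : 0 ≤ 1 / q := by
      have := hpq.symm.pos
      positivity
    exact mul_le_mul_right (ENNReal.rpow_le_rpow
      (lintegral_mono_set (ball_subset_ball hRs)) hq0) _
  have hvol : volume (ball y s) = ENNReal.ofReal ((s / R) ^ n) * volume (ball y R) := by
    have := Measure.addHaar_ball_mul_of_pos (volume : Measure (Eucl n)) y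
      (show 0 < s / R by positivity) R
    rw [div_mul_cancel₀ _ hR.ne'] at this
    rw [this, Measure.addHaar_ball_center volume y]
    simp
  have h4 : P * volume (ball y R) ≤
      (K * ENNReal.ofReal ((s / R) ^ n) * N) * volume (ball y R) := by
    calc P * volume (ball y R) ≤ P * (N * Z) := by gcongr
      _ = N * (P * Z) := by ring
      _ ≤ N * (volume (ball y s) * K) := by gcongr
      _ = _ := by rw [hvol]; ring
  exact (ENNReal.mul_le_mul_iff_left hv0 hvt).1 h4

theorem good_scale {n : ℕ} (w : Eucl n → ℝ≥0∞) (hwmeas : Measurable w)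
    (hw : ∀ᵐ x : Eucl n, 0 < w x ∧ w x < ∞) (p q : ℝ) (hpq : p.HolderConjugate q)
    (hBM : BMCondition w p q) (l : ℝ) (hl : 1 < l) :
    ∃ ρ : ℝ, 1 < ρ ∧ ∃ m : ℕ, ∀ (y : Eucl n) (R0 : ℝ), 0 < R0 → ∃ k < m,
      (wMeas w p (ball y (R0 * ρ ^ (k + 1)))) ^ (1 / p) ≤
        ENNReal.ofReal l * (wMeas w p (ball y (R0 * ρ ^ k))) ^ (1 / p) := by
  have hp := hpq.lt
  have hp0 : 0 < p := by linarith
  obtain ⟨K, hK, hdoub⟩ := doubling w hwmeas hw p q hpq hBM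
  set ρ : ℝ := l ^ (1 / ((n + 1 : ℕ) : ℝ)) with hρ
  have hρ1 : 1 < ρ := Real.one_lt_rpow hl (by positivity)
  have hρ0 : 0 < ρ := by linarith
  have hρn : ρ ^ (n + 1) = l := by
    rw [hρ, ← Real.rpow_natCast, ← Real.rpow_mul (by linarith)]
    rw [one_div, inv_mul_cancel₀ (by positivity), Real.rpow_one]
  have hl0 : 0 < l := by linarith
  have hratio : ρ ^ n / l < 1 := by
    rw [div_lt_one hl0, ← hρn]
    exact pow_lt_pow_right₀ hρ1 (Nat.lt_succ_self n)
  obtain ⟨m, hm⟩ := exists_pow_lt_of_lt_one (show 0 < (K.toReal + 1)⁻¹ by positivity) hratio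
  refine ⟨ρ, hρ1, m, fun y R0 hR0 => ?_⟩
  by_contra hcon
  push Not at hcon
  set N : ℕ → ℝ≥0∞ := fun k => (wMeas w p (ball y (R0 * ρ ^ k))) ^ (1 / p) with hN
  have hNt : ∀ k, N k ≠ ∞ := fun k =>
    ENNReal.rpow_ne_top_of_nonneg (by positivity)
      (wMeas_ball_lt_top w hwmeas hw p q hp hpq.symm.lt hBM y _ (by positivity))
  have hN0 : 0 < (N 0).toReal := by
    refine ENNReal.toReal_pos ?_ (hNt 0)
    have := wMeas_ball_pos w hwmeas hw p hp y (R0 * ρ ^ 0) (by positivity)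
    simp only [hN]
    intro h3
    rw [ENNReal.rpow_eq_zero_iff] at h3
    rcases h3 with h3 | h3
    · exact this h3.1
    · have : (0 : ℝ) < 1 / p := by positivity
      linarith [h3.2]
  have hind : ∀ k ≤ m, l ^ k * (N 0).toReal ≤ (N k).toReal := by
    intro k
    induction k with
    | zero => intro _; simp
    | succ k ih =>
      intro hk
      have h1 := ih (by omega)
      have h2 := ENNReal.toReal_mono (hNt (k + 1)) (hcon k (by omega)).le
      rw [ENNReal.toReal_mul, ENNReal.toReal_ofReal hl0.le] at h2
      calc l ^ (k + 1) * (N 0).toReal = l * (l ^ k * (N 0).toReal) := by ring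
        _ ≤ l * (N k).toReal := by gcongr
        _ ≤ _ := h2
  have h1 := hind m le_rfl
  have h2 : (N m).toReal ≤ K.toReal * (ρ ^ m) ^ n * (N 0).toReal := by
    have h3 := hdoub y (R0 * ρ ^ 0) (R0 * ρ ^ m) (by positivity)
      (by rw [pow_zero, mul_one]; exact le_mul_of_one_le_right hR0.le (one_le_pow₀ hρ1.le))
    have h4 := ENNReal.toReal_mono (ENNReal.mul_ne_top
      (ENNReal.mul_ne_top hK ENNReal.ofReal_ne_top) (hNt 0)) h3
    rw [ENNReal.toReal_mul, ENNReal.toReal_mul, ENNReal.toReal_ofReal (by positivity)] at h4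
    have h5 : R0 * ρ ^ m / (R0 * ρ ^ 0) = ρ ^ m := by
      field_simp
    rwa [h5] at h4
  have h3 : l ^ m ≤ K.toReal * (ρ ^ m) ^ n := le_of_mul_le_mul_right (h1.trans h2) hN0
  rw [div_pow, div_lt_iff₀ (by positivity)] at hm
  have h4 : (ρ ^ n) ^ m = (ρ ^ m) ^ n := by rw [← pow_mul, ← pow_mul, mul_comm]
  rw [h4] at hm
  have hKn : 0 ≤ K.toReal := ENNReal.toReal_nonneg
  have h5 : (K.toReal + 1) * (ρ ^ m) ^ n < l ^ m := by
    have := mul_lt_mul_of_pos_left hm (show 0 < K.toReal + 1 by positivity)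
    rwa [mul_inv_cancel_left₀ (by positivity)] at this
  have : 0 < (ρ ^ m) ^ n := by positivity
  nlinarith

theorem exists_test {n : ℕ} (hn : 1 ≤ n) (p q : ℝ) (hpq : p.HolderConjugate q)
    (w : Eucl n → ℝ≥0∞) (hwmeas : Measurable w)
    (hw : ∀ᵐ x : Eucl n, 0 < w x ∧ w x < ∞) (hBM : BMCondition w p q)
    (C : Set (Eucl n)) (hCopen : IsOpen C) (hCne : C.Nonempty)
    (hcone : ∀ x ∈ C, ∀ α : ℝ, 0 < α → α • x ∈ C)
    (a : Eucl n → ℂ) (ha : MemLp a ⊤ (volume : Measure (Eucl n)))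
    (FP : FourierPlancherelPair n) (c : ℝ) (hc0 : 0 < c)
    (hc : ENNReal.ofReal c < eLpNorm a ⊤ volume) (T : ℝ) :
    ∃ (u : Eucl n → ℂ) (hu2 : MemLp (C.indicator u) 2 (volume : Measure (Eucl n)))
      (B : Set (Eucl n)), MeasurableSet B ∧ (∀ x ∈ B, T ≤ ‖x‖) ∧
      eLpNorm (C.indicator u) (ENNReal.ofReal p) (wMeas w p) ≤ 1 ∧
      ENNReal.ofReal c ≤
        eLpNorm (B.indicator (WOp FP a ha C u hu2)) (ENNReal.ofReal p) (wMeas w p) := by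
  have hp := hpq.lt
  have hp0 : 0 < p := by linarith
  have hpe0 : ENNReal.ofReal p ≠ 0 := by simpa using hp0
  have hnt : Nontrivial (Eucl n) := by
    haveI : Nonempty (Fin n) := ⟨⟨0, by omega⟩⟩
    infer_instance
  obtain ⟨c2, hc20, hcc2, hc2a⟩ := ENNReal.lt_iff_exists_real_btwn.1 hc
  rw [ENNReal.ofReal_lt_ofReal_iff_of_nonneg hc0.le] at hcc2
  set c1 := (c + c2) / 2 with hc1
  have hcc1 : c < c1 := by rw [hc1]; linarith
  have hc12 : c1 < c2 := by rw [hc1]; linarith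
  have hc10 : 0 < c1 := by linarith
  set l := c1 / c with hl
  have hl1 : 1 < l := by rw [hl, one_lt_div hc0]; exact hcc1
  have hl0 : 0 < l := by linarith
  obtain ⟨η, hηc, hη⟩ := exists_lebesgue_point a ha _ hc2a
  have hηc2 : c2 < ‖a η‖ := by
    rw [← ofReal_norm_eq_enorm, ENNReal.ofReal_lt_ofReal_iff_of_nonneg hc20] at hηc
    exact hηc
  obtain ⟨ρ, hρ, m, hgood⟩ := good_scale w hwmeas hw p q hpq hBM l hl1
  have hρ0 : 0 < ρ := by linarith
  let b : ContDiffBump (0 : Eucl n) := ⟨1, ρ, one_pos, hρ⟩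
  set φ : Eucl n → ℂ := fun x => ((b x : ℝ) : ℂ) with hφ
  have hs : HasCompactSupport φ := b.hasCompactSupport.comp_left Complex.ofReal_zero
  have hd : ContDiff ℝ ((⊤ : ℕ∞) : WithTop ℕ∞) φ := Complex.ofRealCLM.contDiff.comp b.contDiff
  obtain ⟨R0, hR0, herr⟩ := errInt_small a ha φ hs hd η hη ((c2 - c1) * (2 * Real.pi) ^ n)
    (mul_pos (by linarith) (by positivity))
  obtain ⟨x0, hx0C, hx0⟩ : ∃ x0, x0 ∈ C ∧ x0 ≠ 0 := by
    obtain ⟨x, hx, hx'⟩ := (dense_compl_singleton (0 : Eucl n)).inter_open_nonempty C hCopen hCne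
    exact ⟨x, hx, hx'⟩
  have hx0n : 0 < ‖x0‖ := norm_pos_iff.2 hx0
  obtain ⟨r0, hr0, hr0C⟩ := Metric.isOpen_iff.1 hCopen x0 hx0C
  set r1 := min r0 (‖x0‖ / 2) with hr1
  have hr10 : 0 < r1 := lt_min hr0 (by positivity)
  set t := R0 * ρ ^ m / r1 + |T| * 2 / ‖x0‖ with ht
  have ht0 : 0 < t := by positivity
  have ht1 : R0 * ρ ^ m ≤ t * r1 := by
    rw [← div_le_iff₀ hr10, ht]
    exact le_add_of_nonneg_right (by positivity)
  have ht2 : T ≤ t * (‖x0‖ / 2) := by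
    have h1 : |T| * 2 / ‖x0‖ ≤ t := by
      rw [ht]
      exact le_add_of_nonneg_left (by positivity)
    rw [div_le_iff₀ hx0n] at h1
    have := le_abs_self T
    linarith
  set y := t • x0 with hy
  obtain ⟨k, hkm, hk⟩ := hgood y R0 hR0
  set R := R0 * ρ ^ k with hR
  have hR0R : R0 ≤ R := le_mul_of_one_le_right hR0.le (one_le_pow₀ hρ.le)
  have hRpos : 0 < R := hR0.trans_le hR0R
  have hRρ : R0 * ρ ^ (k + 1) = R * ρ := by rw [hR]; ring
  rw [hRρ] at hk
  have hRm : R * ρ ≤ t * r1 := by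
    rw [← hRρ]
    refine le_trans ?_ ht1
    gcongr
    · exact hρ.le
    · omega
  have hballC : ball y (R * ρ) ⊆ C := by
    intro x hx
    have h1 : t⁻¹ • x ∈ C := by
      apply hr0C
      rw [mem_ball, dist_eq_norm]
      have h2 : t⁻¹ • x - x0 = t⁻¹ • (x - y) := by
        rw [smul_sub, hy, inv_smul_smul₀ ht0.ne']
      rw [h2, norm_smul, norm_inv, Real.norm_of_nonneg ht0.le, inv_mul_lt_iff₀ ht0]
      rw [mem_ball, dist_eq_norm] at hx
      refine hx.trans_le (hRm.trans ?_)
      gcongr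
      exact min_le_left _ _
    have := hcone _ h1 t ht0
    rwa [smul_inv_smul₀ ht0.ne'] at this
  have hsub : ball y R ⊆ ball y (R * ρ) :=
    ball_subset_ball (le_mul_of_one_le_right hRpos.le hρ.le)
  have hballT : ∀ x ∈ ball y R, T ≤ ‖x‖ := by
    intro x hx
    have hx' := hsub hx
    rw [mem_ball, dist_eq_norm] at hx'
    have h1 : ‖y‖ = t * ‖x0‖ := by rw [hy, norm_smul, Real.norm_of_nonneg ht0.le]
    have h2 : ‖y‖ - ‖x‖ ≤ ‖x - y‖ := by
      rw [← norm_neg (x - y), neg_sub]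
      exact norm_sub_norm_le _ _
    have h3 : t * r1 ≤ t * (‖x0‖ / 2) := by
      gcongr
      exact min_le_right _ _
    linarith
  set N := (wMeas w p (ball y R)) ^ (1 / p) with hN
  have hNt : N ≠ ∞ := ENNReal.rpow_ne_top_of_nonneg (by positivity)
      (wMeas_ball_lt_top w hwmeas hw p q hp hpq.symm.lt hBM y _ hRpos)
  have hN0 : 0 < N.toReal := by
    refine ENNReal.toReal_pos ?_ hNt
    have := wMeas_ball_pos w hwmeas hw p hp y R hRpos
    rw [hN]
    intro h3
    rw [ENNReal.rpow_eq_zero_iff] at h3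
    rcases h3 with h3 | h3
    · exact this h3.1
    · have : (0 : ℝ) < 1 / p := by positivity
      linarith [h3.2]
  have hNr : N = ENNReal.ofReal N.toReal := (ENNReal.ofReal_toReal hNt).symm
  set τ := (l * N.toReal)⁻¹ with hτ
  have hτ0 : 0 < τ := by positivity
  set u := testFun φ τ η y R with hu
  have hu2 : MemLp u 2 volume :=
    (testFun_continuous φ hd.continuous τ η y R).memLp_of_hasCompactSupport
      (testFun_compact φ hs τ η y R hRpos)
  have hnu : ∀ x, ‖u x‖ ≤ τ := by
    intro x
    rw [hu, norm_testFun, abs_of_pos hτ0, hφ]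
    simp only [Complex.norm_real]
    rw [Real.norm_of_nonneg b.nonneg]
    exact mul_le_of_le_one_right hτ0.le b.le_one
  have hu0 : ∀ x, x ∉ ball y (R * ρ) → u x = 0 := by
    intro x hx
    rw [hu, testFun]
    have : b (R⁻¹ • (x - y)) = 0 := by
      apply b.zero_of_le_dist
      rw [dist_zero_right, norm_smul, norm_inv, Real.norm_of_nonneg hRpos.le]
      rw [mem_ball, dist_eq_norm, not_lt] at hx
      rw [le_inv_mul_iff₀ hRpos]
      exact hx
    simp [hφ, this]
  have hu1 : ∀ x ∈ ball y R, ‖u x‖ = τ := by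
    intro x hx
    rw [hu, norm_testFun, abs_of_pos hτ0, hφ]
    have : b (R⁻¹ • (x - y)) = 1 := by
      apply b.one_of_mem_closedBall
      rw [mem_closedBall_zero_iff, norm_smul, norm_inv, Real.norm_of_nonneg hRpos.le]
      rw [mem_ball, dist_eq_norm] at hx
      rw [inv_mul_le_iff₀ hRpos]
      change ‖x - y‖ ≤ R * 1
      linarith
    simp [this]
  have hCu : C.indicator u = u := by
    apply Set.indicator_eq_self.2
    intro x hx
    by_contra hxC
    exact hx (hu0 x fun h => hxC (hballC h))
  have happ : ∀ f, f = u → ∀ hf : MemLp f 2 volume,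
      ∀ᵐ x, ‖(FP.Finv (mulOp a ha (FP.F (hf.toLp _))) : Eucl n → ℂ) x - a η * u x‖
        ≤ τ * (c2 - c1) := by
    rintro f rfl hf
    filter_upwards [approx_pointwise FP a ha φ hs hd τ η y R hRpos hf] with x hx
    refine hx.trans ?_
    rw [abs_of_pos hτ0]
    gcongr
    rw [inv_mul_le_iff₀ (by positivity), mul_comm]
    exact herr R hR0R
  have hu2' : MemLp (C.indicator u) 2 volume := by rwa [hCu]
  refine ⟨u, hu2', ball y R, measurableSet_ball, hballT, ?_, ?_⟩
  · rw [hCu]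
    calc eLpNorm u (ENNReal.ofReal p) (wMeas w p)
        ≤ eLpNorm ((ball y (R * ρ)).indicator fun _ => τ) (ENNReal.ofReal p) (wMeas w p) := by
          apply eLpNorm_mono_real
          intro x
          by_cases hx : x ∈ ball y (R * ρ)
          · rw [Set.indicator_of_mem hx]
            exact hnu x
          · rw [Set.indicator_of_notMem hx, hu0 x hx, norm_zero]
      _ = ENNReal.ofReal τ * (wMeas w p (ball y (R * ρ))) ^ (1 / p) := by
          rw [eLpNorm_indicator_const measurableSet_ball hpe0 ENNReal.ofReal_ne_top,
            ENNReal.toReal_ofReal hp0.le, Real.enorm_of_nonneg hτ0.le]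
      _ ≤ ENNReal.ofReal τ * (ENNReal.ofReal l * N) := by gcongr
      _ = 1 := by
          rw [hNr, ← ENNReal.ofReal_mul hl0.le, ← ENNReal.ofReal_mul hτ0.le, hτ,
            inv_mul_cancel₀ (by positivity), ENNReal.ofReal_one]
  · have h1 := (wMeas_ac w p).ae_le (happ _ hCu hu2')
    calc ENNReal.ofReal c = ENNReal.ofReal (c1 * τ) * N := by
          rw [hNr, ← ENNReal.ofReal_mul (by positivity)]
          congr 1
          rw [hτ, hl]
          field_simp
      _ = eLpNorm ((ball y R).indicator fun _ => c1 * τ) (ENNReal.ofReal p) (wMeas w p) := by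
          rw [eLpNorm_indicator_const measurableSet_ball hpe0 ENNReal.ofReal_ne_top,
            ENNReal.toReal_ofReal hp0.le, Real.enorm_of_nonneg (by positivity)]
      _ ≤ _ := by
          apply eLpNorm_mono_ae
          filter_upwards [h1] with x hx
          by_cases hxb : x ∈ ball y R
          · rw [Set.indicator_of_mem hxb, Set.indicator_of_mem hxb, WOp,
              Set.indicator_of_mem (hballC (hsub hxb)), Real.norm_of_nonneg (by positivity)]
            have h2 : ‖a η * u x‖ = ‖a η‖ * τ := by rw [norm_mul, hu1 x hxb]
            have h3 := norm_sub_norm_le (a η * u x)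
              ((FP.Finv (mulOp a ha (FP.F (hu2'.toLp _))) : Eucl n → ℂ) x)
            rw [norm_sub_rev] at h3
            nlinarith
          · rw [Set.indicator_of_notMem hxb, Set.indicator_of_notMem hxb]
            simp

theorem tail_tendsto {n : ℕ} (μ : Measure (Eucl n)) (p : ℝ) (hp : 1 < p) (v : Eucl n → ℂ)
    (hv : eLpNorm v (ENNReal.ofReal p) μ < ∞) :
    Tendsto (fun j : ℕ => eLpNorm ({x : Eucl n | (j : ℝ) ≤ ‖x‖}.indicator v)
      (ENNReal.ofReal p) μ) atTop (nhds 0) := by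
  have hp0 : 0 < p := by linarith
  have hpe0 : ENNReal.ofReal p ≠ 0 := by simpa using hp0
  have hmeas : ∀ j : ℕ, MeasurableSet {x : Eucl n | (j : ℝ) ≤ ‖x‖} := fun j =>
    measurableSet_le measurable_const measurable_norm
  set ν := μ.withDensity (fun x => ‖v x‖ₑ ^ p) with hν
  have h1 : ∀ j : ℕ, eLpNorm ({x : Eucl n | (j : ℝ) ≤ ‖x‖}.indicator v)
      (ENNReal.ofReal p) μ = (ν {x : Eucl n | (j : ℝ) ≤ ‖x‖}) ^ (1 / p) := by
    intro j
    rw [eLpNorm_indicator_eq_eLpNorm_restrict (hmeas j),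
      eLpNorm_eq_lintegral_rpow_enorm_toReal hpe0 ENNReal.ofReal_ne_top,
      ENNReal.toReal_ofReal hp0.le, hν, withDensity_apply _ (hmeas j)]
  have hfin : ∃ j : ℕ, ν {x : Eucl n | (j : ℝ) ≤ ‖x‖} ≠ ∞ := by
    refine ⟨0, ?_⟩
    rw [eLpNorm_eq_lintegral_rpow_enorm_toReal hpe0 ENNReal.ofReal_ne_top,
      ENNReal.toReal_ofReal hp0.le] at hv
    have h2 : ∫⁻ x, ‖v x‖ₑ ^ p ∂μ < ∞ := by
      by_contra hcon
      push Not at hcon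
      rw [top_le_iff.1 hcon, ENNReal.top_rpow_of_pos (by positivity)] at hv
      exact lt_irrefl _ hv
    rw [hν, withDensity_apply _ (hmeas 0)]
    exact ((setLIntegral_le_lintegral _ _).trans_lt h2).ne
  have h2 := tendsto_measure_iInter_atTop (μ := ν) (fun j => (hmeas j).nullMeasurableSet)
    (by
      intro i j hij x hx
      have h3 : (i : ℝ) ≤ j := by exact_mod_cast hij
      exact h3.trans hx) hfin
  have h3 : (⋂ j : ℕ, {x : Eucl n | (j : ℝ) ≤ ‖x‖}) = ∅ := by
    ext x
    simp only [Set.mem_iInter, Set.mem_setOf_eq, Set.mem_empty_iff_false, iff_false, not_forall,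
      not_le]
    exact exists_nat_gt _
  rw [h3, measure_empty] at h2
  simp only [h1]
  have h4 := h2.ennrpow_const (1 / p)
  rw [ENNReal.zero_rpow_of_pos (by positivity)] at h4
  exact h4

/-- lower bound for the Kuratowski measure of noncompactness of the image of
the unit ball of `L²(C) ∩ L^p(C,w)` under a Wiener–Hopf type operator on the weighted
Lebesgue space `L^p(C, w)` over an open cone `C`.  The Kuratowski measure is spelled out
via covers by finitely many sets of diameter (in the `L^p(C,w)` pseudometric) at most `r`. -/
theorem weighted_kuratowski_lower_bound (n : ℕ) (hn : 1 ≤ n) (p q : ℝ) (hp : 1 < p)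
    (hpq : 1 / p + 1 / q = 1) (w : Eucl n → ℝ≥0∞) (hwmeas : Measurable w)
    (hw : ∀ᵐ x : Eucl n, 0 < w x ∧ w x < ∞) (hBM : BMCondition w p q)
    (C : Set (Eucl n)) (hCopen : IsOpen C) (hCne : C.Nonempty)
    (hcone : ∀ x ∈ C, ∀ α : ℝ, 0 < α → α • x ∈ C)
    (a : Eucl n → ℂ) (ha : MemLp a ⊤ (volume : Measure (Eucl n)))
    (FP : FourierPlancherelPair n) (M : ℝ) (hM0 : 0 ≤ M)
    (hM : ∀ (u : Eucl n → ℂ) (hu2 : MemLp u 2 (volume : Measure (Eucl n))),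
      wLpNorm u p w < ∞ →
      wLpNorm (FP.Finv (mulOp a ha (FP.F (hu2.toLp u))) : Eucl n → ℂ) p w
        ≤ ENNReal.ofReal M * wLpNorm u p w) :
    eLpNorm a ⊤ volume ≤
      sInf { r : ℝ≥0∞ |
        ∃ 𝒞 : Finset (Set (Eucl n → ℂ)),
          (∀ (u : Eucl n → ℂ) (hu2 : MemLp (C.indicator u) 2 (volume : Measure (Eucl n))),
            wLpNorm (C.indicator u) p w < ∞ → wLpNorm (C.indicator u) p w ≤ 1 →
              ∃ s ∈ 𝒞, WOp FP a ha C u hu2 ∈ s) ∧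
          ∀ s ∈ 𝒞, ∀ f ∈ s, ∀ g ∈ s, wLpNorm (f - g) p w ≤ r } := by

  have hp0 : 0 < p := by linarith
  have hpq' : p.HolderConjugate q := by
    rw [Real.holderConjugate_iff]
    refine ⟨hp, ?_⟩
    rw [← one_div, ← one_div]
    exact hpq
  have hpe1 : 1 ≤ ENNReal.ofReal p := by
    rw [← ENNReal.ofReal_one]
    exact ENNReal.ofReal_le_ofReal hp.le
  apply le_sInf
  rintro r ⟨𝒞, hcov, hdiam⟩
  refine le_of_forall_lt fun c' hc' => ?_
  by_contra hrc'
  push Not at hrc'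
  obtain ⟨c, hc0, hc'c, hca⟩ := ENNReal.lt_iff_exists_real_btwn.1 hc'
  have hcpos : 0 < c := by
    by_contra hneg
    push Not at hneg
    rw [ENNReal.ofReal_of_nonpos hneg] at hc'c
    exact not_lt_bot hc'c
  have hex := fun j : ℕ => exists_test hn p q hpq' w hwmeas hw hBM C hCopen hCne hcone a ha FP
    c hcpos hca (j : ℝ)
  choose u hu2 B hBm hBT hu1 hlow using hex
  set μ := wMeas w p with hμ
  set v : ℕ → Eucl n → ℂ := fun j => WOp FP a ha C (u j) (hu2 j) with hv
  have hvm : ∀ j, AEStronglyMeasurable (v j) volume := fun j =>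
    (Lp.aestronglyMeasurable _).indicator hCopen.measurableSet
  have hvm' : ∀ j, AEStronglyMeasurable (v j) μ := fun j => (hvm j).mono_ac (wMeas_ac w p)
  have hwu : ∀ j, wLpNorm (C.indicator (u j)) p w ≤ 1 := fun j => by
    rw [wLpNorm_eq w hwmeas p hp _ (hu2 j).1]
    exact hu1 j
  have hwut : ∀ j, wLpNorm (C.indicator (u j)) p w < ∞ := fun j =>
    (hwu j).trans_lt ENNReal.one_lt_top
  have hvt : ∀ j, eLpNorm (v j) (ENNReal.ofReal p) μ < ∞ := fun j => by
    have h1 := hM _ (hu2 j) (hwut j)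
    rw [wLpNorm_eq w hwmeas p hp _ (Lp.aestronglyMeasurable _)] at h1
    refine lt_of_le_of_lt (eLpNorm_indicator_le _) (h1.trans_lt ?_)
    exact ENNReal.mul_lt_top ENNReal.ofReal_lt_top (hwut j)
  have hmem : ∀ j, ∃ s ∈ 𝒞, v j ∈ s := fun j => hcov (u j) (hu2 j) (hwut j) (hwu j)
  choose S hS𝒞 hvS using hmem
  obtain ⟨s, hs⟩ : ∃ s : 𝒞, (((fun j => (⟨S j, hS𝒞 j⟩ : 𝒞)) ⁻¹' {s}) : Set ℕ).Infinite := by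
    obtain ⟨s, hs⟩ := Finite.exists_infinite_fiber (fun j => (⟨S j, hS𝒞 j⟩ : 𝒞))
    exact ⟨s, Set.infinite_coe_iff.1 hs⟩
  obtain ⟨k, hk⟩ := hs.nonempty
  have hSs : ∀ j, j ∈ (((fun j => (⟨S j, hS𝒞 j⟩ : 𝒞)) ⁻¹' {s}) : Set ℕ) → v j ∈ s.1 := by
    intro j hj
    have h1 : (⟨S j, hS𝒞 j⟩ : 𝒞) = s := hj
    rw [← h1]
    exact hvS j
  have hfreq := Nat.frequently_atTop_iff_infinite.2 hs
  have htail := tail_tendsto μ p hp (v k) (hvt k)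
  have hle : ENNReal.ofReal c ≤ r := by
    have hlim : Tendsto (fun j : ℕ => r + eLpNorm ({x : Eucl n | (j : ℝ) ≤ ‖x‖}.indicator (v k))
      (ENNReal.ofReal p) μ) atTop (nhds (r + 0)) := tendsto_const_nhds.add htail
    rw [add_zero] at hlim
    refine ge_of_tendsto_of_frequently hlim (hfreq.mono fun j hj => ?_)
    have h1 := hdiam s.1 s.2 _ (hSs j hj) _ (hSs k hk)
    rw [wLpNorm_eq w hwmeas p hp _ ((hvm j).sub (hvm k))] at h1
    calc ENNReal.ofReal c ≤ eLpNorm ((B j).indicator (v j)) (ENNReal.ofReal p) μ := hlow j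
      _ = eLpNorm ((B j).indicator (v j - v k) + (B j).indicator (v k))
            (ENNReal.ofReal p) μ := by
          rw [← Set.indicator_add', sub_add_cancel]
      _ ≤ eLpNorm ((B j).indicator (v j - v k)) (ENNReal.ofReal p) μ +
            eLpNorm ((B j).indicator (v k)) (ENNReal.ofReal p) μ :=
          eLpNorm_add_le (((hvm' j).sub (hvm' k)).indicator (hBm j))
            ((hvm' k).indicator (hBm j)) hpe1
      _ ≤ r + eLpNorm ({x : Eucl n | (j : ℝ) ≤ ‖x‖}.indicator (v k)) (ENNReal.ofReal p) μ := by
          gcongr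
          · exact (eLpNorm_indicator_le _).trans h1
          · apply eLpNorm_mono
            intro x
            exact norm_indicator_le_of_subset (hBT j) _ _
  exact absurd (hc'c.trans_le (hle.trans hrc')) (lt_irrefl _)

end
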